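/- Let n ≥ 3 and let {Dᵢ : i ∈ ℤ/nℤ} and {D̃ᵢ : i ∈ ℤ/nℤ} be collections of closed disks in ℂ such that: no three disks of either collection have a common point; D̃ᵢ is contained in the interior of Dᵢ for all i; Dᵢ overlaps with Dᵢ₊₁ and Dᵢ₋₁, and D̃ᵢ overlaps with D̃ᵢ₊₁ and D̃ᵢ₋₁, for all i; and Dᵢ meets Dⱼ only when i = j ± 1. Then Σᵢ ∠(D̃ᵢ, D̃ᵢ₊₁) < Σᵢ ∠(Dᵢ, Dᵢ₊₁); in particular, for some i, ∠(Dᵢ, Dᵢ₊₁) ≠ ∠(D̃ᵢ, D̃ᵢ₊₁). -/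

import Mathlib

open Metric Real

/-- External intersection angle between two overlapping closed metric disks in `ℂ`
(neither contained in the other), computed from centers and radii. -/
noncomputable def extAngle (c₁ : ℂ) (r₁ : ℝ) (c₂ : ℂ) (r₂ : ℝ) : ℝ :=
  Real.arccos ((dist c₁ c₂ ^ 2 - r₁ ^ 2 - r₂ ^ 2) / (2 * r₁ * r₂))

/-- Two circles cross transversely wherever they meet. -/
def CircTrans (c₁ : ℂ) (r₁ : ℝ) (c₂ : ℂ) (r₂ : ℝ) : Prop :=
  (Metric.sphere c₁ r₁ ∩ Metric.sphere c₂ r₂).Nonempty →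
    dist c₁ c₂ ≠ r₁ + r₂ ∧ dist c₁ c₂ ≠ |r₁ - r₂|

/-!
Replace the disks `Dᵢ` by `D̃ᵢ` one at a time. Each replacement strictly decreases the sum of the
angles: if `D` is replaced by a disk `E` in its interior and `A`, `B` are the two neighbors, then
`∠(A, E) + ∠(B, E) < ∠(A, D) + ∠(B, D)`. To see this, invert in a point of `∂D` outside of `A ∪ B`,
which turns `D` into a half-plane with inner normal `v`. Write `a`, `b`, `e` for the centers after
the inversion. The angle `∠(A, E)` is at most the sum of half of the arc of `∂A` in `E` and half of
the arc of `∂E` in `A`. The arcs of `∂E` in `A` and in `B` are disjoint, so their halves add up to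
at most `∠(a - e, b - e) ≤ ∠(e - a, v) + ∠(e - b, v)`. The arc of `∂A` in `E` stays in the
half-plane, so its half is smaller than `∠(A, D) - ∠(e - a, v)`, and likewise for `B`.
-/

open InnerProductGeometry
open EuclideanGeometry (inversion)
open scoped RealInnerProductSpace

section Angles

variable {V : Type*} [NormedAddCommGroup V] [InnerProductSpace ℝ V]

lemma inner_le_inner_of_angle_le {u w z : V} (huw : ‖u‖ = ‖w‖) (h : angle z u ≤ angle z w) :
    ⟪z, w⟫ ≤ ⟪z, u⟫ := by
  have hcos : cos (angle z w) ≤ cos (angle z u) :=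
    cos_le_cos_of_nonneg_of_le_pi (angle_nonneg z u) (angle_le_pi z w) h
  rw [← cos_angle_mul_norm_mul_norm z w, ← cos_angle_mul_norm_mul_norm z u, huw]
  gcongr

lemma dist_add_le_dist_of_angle_le {c p u x : V} (hu : ‖u‖ = ‖p - c‖)
    (h : angle (x - c) u ≤ angle (x - c) (p - c)) : dist (c + u) x ≤ dist p x := by
  have hinner := inner_le_inner_of_angle_le hu h
  have hcu : dist (c + u) x = ‖u - (x - c)‖ := by rw [dist_eq_norm]; congr 1; abel
  have hp : dist p x = ‖p - c - (x - c)‖ := by rw [dist_eq_norm, sub_sub_sub_cancel_right]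
  rw [hcu, hp, ← sq_le_sq₀ (norm_nonneg _) (norm_nonneg _), norm_sub_sq_real u,
    norm_sub_sq_real (p - c), hu, real_inner_comm (x - c) u, real_inner_comm (x - c) (p - c)]
  linarith

lemma angle_exp_mul_I_le_abs_sub (x y : ℝ) :
    angle (Complex.exp (x * Complex.I)) (Complex.exp (y * Complex.I)) ≤ |x - y| := by
  rcases le_or_gt |x - y| π with hle | hgt
  · refine le_of_eq (arccos_eq_of_eq_cos (abs_nonneg _) hle ?_)
    rw [cos_abs, cos_sub]
    simp [Complex.inner, Complex.exp_re, Complex.exp_im, mul_comm]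
  · exact (angle_le_pi _ _).trans hgt.le

lemma exists_norm_eq_and_angle_le {z w : ℂ} (hz : z ≠ 0) (hw : w ≠ 0) {ρ a b : ℝ} (hρ : 0 < ρ)
    (ha : 0 ≤ a) (hb : 0 ≤ b) (h : angle z w ≤ a + b) :
    ∃ u : ℂ, ‖u‖ = ρ ∧ angle z u ≤ a ∧ angle w u ≤ b := by
  obtain ⟨τ, hτ, hτφ⟩ : ∃ τ, dist 0 τ ≤ a ∧ dist τ (w / z).arg ≤ b := by
    refine exists_dist_le_le ha hb ?_
    rwa [dist_zero_left, norm_eq_abs, ← Complex.angle_eq_abs_arg hw hz, angle_comm, add_comm]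
  have hw_polar : w = z * (‖w / z‖ • Complex.exp ((w / z).arg * Complex.I)) := by
    rw [Complex.real_smul, Complex.norm_mul_exp_arg_mul_I, mul_div_cancel₀ w hz]
  have hnorm : 0 < ρ / ‖z‖ := div_pos hρ (norm_pos_iff.2 hz)
  refine ⟨z * ((ρ / ‖z‖) • Complex.exp (τ * Complex.I)), ?_, ?_, ?_⟩
  · rw [norm_mul, norm_smul, Complex.norm_exp_ofReal_mul_I, norm_of_nonneg hnorm.le, mul_one,
      mul_div_cancel₀ _ (norm_ne_zero_iff.2 hz)]
  · calc angle z (z * ((ρ / ‖z‖) • Complex.exp (τ * Complex.I)))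
        = angle 1 (Complex.exp (τ * Complex.I)) := by
          nth_rw 1 [← mul_one z]
          rw [Complex.angle_mul_left hz, angle_smul_right_of_pos _ _ hnorm]
      _ ≤ |0 - τ| := by simpa using angle_exp_mul_I_le_abs_sub 0 τ
      _ ≤ a := hτ
  · calc angle w (z * ((ρ / ‖z‖) • Complex.exp (τ * Complex.I)))
        = angle (Complex.exp ((w / z).arg * Complex.I)) (Complex.exp (τ * Complex.I)) := by
          nth_rw 1 [hw_polar]
          rw [Complex.angle_mul_left hz, angle_smul_right_of_pos _ _ hnorm,
            angle_smul_left_of_pos _ _ (norm_pos_iff.2 (div_ne_zero hw hz))]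
      _ ≤ |(w / z).arg - τ| := angle_exp_mul_I_le_abs_sub _ _
      _ ≤ b := by rwa [abs_sub_comm]

end Angles

section Crossing

lemma inter_sphere_nonempty_of_isPreconnected {X : Type*} [PseudoMetricSpace X] {S : Set X} {x : X}
    {ρ : ℝ} (hS : IsPreconnected S) (hmeet : (S ∩ closedBall x ρ).Nonempty)
    (hsub : ¬ S ⊆ closedBall x ρ) : (S ∩ sphere x ρ).Nonempty := by
  obtain ⟨y, hyS, hy⟩ := hmeet
  obtain ⟨z, hzS, hz⟩ := Set.not_subset.1 hsub
  obtain ⟨p, hpS, hp⟩ := hS.intermediate_value hyS hzS (f := fun w ↦ dist w x) (by fun_prop)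
    ⟨hy, (not_le.1 hz).le⟩
  exact ⟨p, hpS, hp⟩

lemma exists_notMem_notMem_of_isPreconnected {X : Type*} [TopologicalSpace X] {S A B : Set X}
    (hS : IsPreconnected S) (hA : IsClosed A) (hB : IsClosed B) (hSA : (S ∩ A).Nonempty)
    (hSB : (S ∩ B).Nonempty) (hSAB : S ∩ (A ∩ B) = ∅) : ∃ q ∈ S, q ∉ A ∧ q ∉ B := by
  by_contra! hcover
  have hsub : S ⊆ A ∪ B := fun q hq ↦ or_iff_not_imp_left.2 (hcover q hq)
  exact (isPreconnected_closed_iff.1 hS A B hA hB hsub hSA hSB).ne_empty hSAB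

variable {V : Type*} [NormedAddCommGroup V] [NormedSpace ℝ V]

lemma closedBall_subset_closedBall_of_sphere_subset [Nontrivial V] {x y : V} {r s : ℝ}
    (h : sphere x r ⊆ closedBall y s) : closedBall x r ⊆ closedBall y s := by
  rcases lt_or_ge r 0 with hr | hr
  · simp [closedBall_eq_empty.2 hr]
  · rw [← convexHull_sphere_eq_closedBall x hr]
    exact convexHull_min h (convex_closedBall y s)

lemma sphere_inter_sphere_nonempty (hV : 1 < Module.rank ℝ V) {x y : V} {r s : ℝ}
    (hmeet : (closedBall x r ∩ closedBall y s).Nonempty)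
    (hxy : ¬ closedBall x r ⊆ closedBall y s) (hyx : ¬ closedBall y s ⊆ closedBall x r) :
    (sphere x r ∩ sphere y s).Nonempty := by
  have : Nontrivial V := rank_pos_iff_nontrivial.1 (zero_lt_one.trans hV)
  obtain ⟨z, hzx, hzy⟩ : (closedBall x r ∩ sphere y s).Nonempty :=
    inter_sphere_nonempty_of_isPreconnected (convex_closedBall x r).isPreconnected hmeet hxy
  rw [Set.inter_comm]
  exact inter_sphere_nonempty_of_isPreconnected (isPreconnected_sphere hV y s) ⟨z, hzy, hzx⟩
    fun h ↦ hyx (closedBall_subset_closedBall_of_sphere_subset h)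

end Crossing

section HalfPlane

variable {a b e p q x y v : ℂ} {α β t : ℝ}

lemma extAngle_comm (c₁ : ℂ) (r₁ : ℝ) (c₂ : ℂ) (r₂ : ℝ) :
    extAngle c₁ r₁ c₂ r₂ = extAngle c₂ r₂ c₁ r₁ := by
  unfold extAngle
  rw [dist_comm]
  ring_nf

lemma extAngle_eq_angle (hpa : p ∈ sphere a α) (hpe : p ∈ sphere e t) :
    extAngle a α e t = angle (p - a) (e - p) := by
  rw [mem_sphere, dist_eq_norm] at hpa
  rw [mem_sphere, dist_comm, dist_eq_norm] at hpe
  have hdist : dist a e ^ 2 = α ^ 2 + 2 * ⟪p - a, e - p⟫ + t ^ 2 := by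
    rw [dist_comm, dist_eq_norm, ← hpa, ← hpe, ← norm_add_sq_real, sub_add_sub_comm, add_comm,
      add_sub_add_right_eq_sub]
  rw [extAngle, angle, hpa, hpe, hdist, mul_assoc, ← mul_div_mul_left _ (α * t) two_ne_zero]
  ring_nf

lemma extAngle_le_angle_add_angle (hpa : p ∈ sphere a α) (hpe : p ∈ sphere e t) :
    extAngle a α e t ≤ angle (e - a) (p - a) + angle (a - e) (p - e) :=
  calc extAngle a α e t = angle (p - a) (e - p) := extAngle_eq_angle hpa hpe
    _ ≤ angle (p - a) (e - a) + angle (e - a) (e - p) := angle_le_angle_add_angle _ _ _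
    _ = angle (e - a) (p - a) + angle (a - e) (p - e) := by
      rw [angle_comm, ← angle_neg_neg (e - a) (e - p), neg_sub, neg_sub]

lemma angle_add_angle_le_of_inter_eq_empty (hpa : p ∈ sphere a α) (hpe : p ∈ sphere e t)
    (hqb : q ∈ sphere b β) (hqe : q ∈ sphere e t)
    (hdisj : closedBall a α ∩ closedBall b β ∩ closedBall e t = ∅) :
    angle (a - e) (p - e) + angle (b - e) (q - e) ≤ angle (a - e) (b - e) := by
  have hempty (w : ℂ) (hwa : dist w a ≤ α) (hwb : dist w b ≤ β) (hwe : dist w e ≤ t) : False :=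
    Set.eq_empty_iff_forall_notMem.1 hdisj w ⟨⟨hwa, hwb⟩, hwe⟩
  rw [mem_sphere] at hpa hpe hqb hqe
  have hae : a ≠ e := by
    rintro rfl
    exact hempty q (by linarith) hqb.le hqe.le
  have hbe : b ≠ e := by
    rintro rfl
    exact hempty p hpa.le (by linarith) hpe.le
  have hpe_ne : p ≠ e := by
    rintro rfl
    rw [dist_self] at hpe
    rw [← hpe, dist_eq_zero] at hqe
    exact hempty p hpa.le (hqe ▸ hqb.le) (by rw [dist_self, hpe])
  -- If the half-arcs overlapped, some point `e + u` of `∂E` would lie in both `A` and `B`.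
  by_contra! hlt
  obtain ⟨u, hu, hua, hub⟩ := exists_norm_eq_and_angle_le (sub_ne_zero.2 hae) (sub_ne_zero.2 hbe)
    (norm_pos_iff.2 (sub_ne_zero.2 hpe_ne)) (angle_nonneg _ _) (angle_nonneg _ _) hlt.le
  have huq : ‖u‖ = ‖q - e‖ := by rw [hu, ← dist_eq_norm, ← dist_eq_norm, hpe, hqe]
  refine hempty (e + u) ((dist_add_le_dist_of_angle_le hu hua).trans hpa.le)
    ((dist_add_le_dist_of_angle_le huq hub).trans hqb.le) ?_
  rw [dist_self_add_left, hu, ← dist_eq_norm, hpe]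

lemma angle_add_angle_lt_of_closedBall_subset_halfPlane (hpa : p ∈ sphere a α)
    (hpe : p ∈ sphere e t) (hxa : x ∈ sphere a α) (hlt : ∀ w ∈ closedBall e t, ⟪x, v⟫ < ⟪w, v⟫) :
    angle (e - a) (p - a) + angle (e - a) v < angle (x - a) v := by
  have hxp : ⟪x, v⟫ < ⟪p, v⟫ := hlt p (sphere_subset_closedBall hpe)
  rw [mem_sphere] at hpa hpe hxa
  have hv : v ≠ 0 := by
    rintro rfl
    simp at hxp
  have hpa_ne : p ≠ a := by
    rintro rfl
    rw [dist_self] at hpa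
    rw [← hpa, dist_eq_zero] at hxa
    exact hxp.ne (by rw [hxa])
  have hea : e ≠ a := by
    rintro rfl
    exact lt_irrefl _ (hlt x (by rw [mem_closedBall]; linarith))
  -- Otherwise some point `a + u` of the arc of `∂A` in `E` would be as low as `x`.
  by_contra! hle
  obtain ⟨u, hu, hue, huv⟩ := exists_norm_eq_and_angle_le (sub_ne_zero.2 hea) (neg_ne_zero.2 hv)
    (norm_pos_iff.2 (sub_ne_zero.2 hpa_ne)) (angle_nonneg (e - a) (p - a))
    (angle_nonneg (-v) (x - a))
    (by rw [angle_neg_right, angle_neg_left, angle_comm v]; linarith)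
  have hux : ‖u‖ = ‖x - a‖ := by rw [hu, ← dist_eq_norm, ← dist_eq_norm, hpa, hxa]
  have hmem : a + u ∈ closedBall e t := (dist_add_le_dist_of_angle_le hu hue).trans hpe.le
  have hinner : ⟪u, v⟫ ≤ ⟪x - a, v⟫ := by
    simpa only [inner_neg_left, neg_le_neg_iff, real_inner_comm v] using
      inner_le_inner_of_angle_le hux huv
  have hlt_add := hlt _ hmem
  rw [inner_add_left] at hlt_add
  rw [inner_sub_left] at hinner
  linarith

lemma extAngle_add_extAngle_lt_of_closedBall_subset_halfPlane
    (hpa : p ∈ sphere a α) (hpe : p ∈ sphere e t) (hqb : q ∈ sphere b β) (hqe : q ∈ sphere e t)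
    (hdisj : closedBall a α ∩ closedBall b β ∩ closedBall e t = ∅)
    (hxa : x ∈ sphere a α) (hx : ∀ w ∈ closedBall e t, ⟪x, v⟫ < ⟪w, v⟫)
    (hyb : y ∈ sphere b β) (hy : ∀ w ∈ closedBall e t, ⟪y, v⟫ < ⟪w, v⟫) :
    extAngle a α e t + extAngle b β e t < angle (x - a) v + angle (y - b) v := by
  have hA := extAngle_le_angle_add_angle hpa hpe
  have hB := extAngle_le_angle_add_angle hqb hqe
  have hE := angle_add_angle_le_of_inter_eq_empty hpa hpe hqb hqe hdisj
  have hHA := angle_add_angle_lt_of_closedBall_subset_halfPlane hpa hpe hxa hx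
  have hHB := angle_add_angle_lt_of_closedBall_subset_halfPlane hqb hqe hyb hy
  have hcenters : angle (a - e) (b - e) ≤ angle (e - a) v + angle (e - b) v := by
    rw [← angle_neg_neg, neg_sub, neg_sub, angle_comm (e - b)]
    exact angle_le_angle_add_angle _ _ _
  linarith

end HalfPlane

section Inversion

section Metric

variable {X : Type*} [PseudoMetricSpace X] {q c : X} {r : ℝ}

lemma dist_sq_sub_sq_pos (hr : 0 ≤ r) (hq : q ∉ closedBall c r) : 0 < dist c q ^ 2 - r ^ 2 := by
  rw [mem_closedBall, not_le, dist_comm] at hq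
  exact sub_pos.2 (by gcongr)

/-- The radius of the image of the ball with center `c` and radius `r` under the inversion in the
unit sphere around `q`, for `q` outside of the ball. -/
noncomputable def inversionRadius (q c : X) (r : ℝ) : ℝ :=
  r / (dist c q ^ 2 - r ^ 2)

lemma inversionRadius_nonneg (hr : 0 ≤ r) (hq : q ∉ closedBall c r) :
    0 ≤ inversionRadius q c r :=
  div_nonneg hr (dist_sq_sub_sq_pos hr hq).le

end Metric

variable {V : Type*} [NormedAddCommGroup V] [InnerProductSpace ℝ V] {q c c₁ c₂ w : V} {r r₁ r₂ : ℝ}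

/-- The center of the image of the ball with center `c` and radius `r` under the inversion in the
unit sphere around `q`, for `q` outside of the ball. -/
noncomputable def inversionCenter (q c : V) (r : ℝ) : V :=
  q + (dist c q ^ 2 - r ^ 2)⁻¹ • (c - q)

lemma inversion_one_sub (q w c : V) :
    inversion q 1 w - c = (‖w - q‖ ^ 2)⁻¹ • (w - q) - (c - q) := by
  rw [inversion, dist_eq_norm, one_div, inv_pow, vsub_eq_sub, vadd_eq_add]
  abel

lemma dist_inversion_sq_sub_sq (hc : dist c q ^ 2 - r ^ 2 ≠ 0) (hw : w ≠ q) :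
    dist (inversion q 1 w) c ^ 2 - r ^ 2 = (dist c q ^ 2 - r ^ 2) / dist w q ^ 2 *
      (dist w (inversionCenter q c r) ^ 2 - inversionRadius q c r ^ 2) := by
  have hwq : ‖w - q‖ ≠ 0 := norm_ne_zero_iff.2 (sub_ne_zero.2 hw)
  unfold inversionCenter inversionRadius
  rw [dist_eq_norm c q] at hc ⊢
  rw [dist_eq_norm, inversion_one_sub, dist_eq_norm, dist_eq_norm, ← sub_sub, norm_sub_sq_real,
    norm_sub_sq_real (w - q), norm_smul, norm_smul, real_inner_smul_left, real_inner_smul_right,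
    mul_pow, mul_pow, norm_eq_abs, norm_eq_abs, sq_abs, sq_abs]
  field_simp
  ring

lemma dist_inversionCenter_sq_sub_sq_sub_sq (hc₁ : dist c₁ q ^ 2 - r₁ ^ 2 ≠ 0)
    (hc₂ : dist c₂ q ^ 2 - r₂ ^ 2 ≠ 0) :
    dist (inversionCenter q c₁ r₁) (inversionCenter q c₂ r₂) ^ 2 - inversionRadius q c₁ r₁ ^ 2 -
        inversionRadius q c₂ r₂ ^ 2 =
      (dist c₁ c₂ ^ 2 - r₁ ^ 2 - r₂ ^ 2) /
        ((dist c₁ q ^ 2 - r₁ ^ 2) * (dist c₂ q ^ 2 - r₂ ^ 2)) := by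
  unfold inversionCenter inversionRadius
  rw [dist_eq_norm c₁ q] at hc₁ ⊢
  rw [dist_eq_norm c₂ q] at hc₂ ⊢
  rw [dist_add_left, dist_eq_norm, dist_eq_norm, ← sub_sub_sub_cancel_right c₁ c₂ q,
    norm_sub_sq_real (_ • _), norm_sub_sq_real (c₁ - q), norm_smul, norm_smul,
    real_inner_smul_left, real_inner_smul_right, mul_pow, mul_pow, norm_eq_abs, norm_eq_abs,
    sq_abs, sq_abs]
  field_simp
  ring

lemma notMem_closedBall_inversionCenter (hr : 0 ≤ r) (hq : q ∉ closedBall c r) :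
    q ∉ closedBall (inversionCenter q c r) (inversionRadius q c r) := by
  have hpos := dist_sq_sub_sq_pos hr hq
  rw [mem_closedBall, not_le, dist_comm] at hq
  rw [mem_closedBall, not_le, inversionCenter, inversionRadius, dist_self_add_right, norm_smul,
    norm_of_nonneg (inv_nonneg.2 hpos.le), ← dist_eq_norm, ← div_eq_inv_mul]
  gcongr

lemma inversion_mem_closedBall_iff (hr : 0 ≤ r) (hq : q ∉ closedBall c r) :
    inversion q 1 w ∈ closedBall c r ↔
      w ∈ closedBall (inversionCenter q c r) (inversionRadius q c r) := by
  rcases eq_or_ne w q with rfl | hw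
  · simp only [EuclideanGeometry.inversion_self, hq, notMem_closedBall_inversionCenter hr hq]
  have hpos := dist_sq_sub_sq_pos hr hq
  have hfactor : 0 < (dist c q ^ 2 - r ^ 2) / dist w q ^ 2 :=
    div_pos hpos (pow_pos (dist_pos.2 hw) 2)
  rw [mem_closedBall, mem_closedBall, ← sq_le_sq₀ dist_nonneg hr,
    ← sq_le_sq₀ dist_nonneg (inversionRadius_nonneg hr hq), ← sub_nonpos,
    dist_inversion_sq_sub_sq hpos.ne' hw, ← smul_eq_mul,
    smul_nonpos_iff_nonpos_of_pos_left hfactor, sub_nonpos]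

lemma inversion_mem_sphere (hr : 0 ≤ r) (hq : q ∉ closedBall c r) (hw : w ∈ sphere c r) :
    inversion q 1 w ∈ sphere (inversionCenter q c r) (inversionRadius q c r) := by
  have hpos := dist_sq_sub_sq_pos hr hq
  have hwq : w ≠ q := fun h ↦ hq (h ▸ sphere_subset_closedBall hw)
  have hinv : inversion q 1 w ≠ q := (EuclideanGeometry.inversion_eq_center one_ne_zero).not.2 hwq
  have hpower := dist_inversion_sq_sub_sq hpos.ne' hinv
  rw [EuclideanGeometry.inversion_inversion q one_ne_zero, mem_sphere.1 hw, sub_self, zero_eq_mul,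
    sub_eq_zero, sq_eq_sq₀ dist_nonneg (inversionRadius_nonneg hr hq)] at hpower
  exact hpower.resolve_left (div_ne_zero hpos.ne' (pow_ne_zero 2 (dist_ne_zero.2 hinv)))

variable {d : V} {s : ℝ}

lemma dist_inversion_sq_sub_sq_of_mem_sphere (hq : q ∈ sphere d s) (hw : w ≠ q) :
    dist (inversion q 1 w) d ^ 2 - s ^ 2 = (1 - 2 * ⟪w - q, d - q⟫) / dist w q ^ 2 := by
  have hwq : ‖w - q‖ ≠ 0 := norm_ne_zero_iff.2 (sub_ne_zero.2 hw)
  rw [mem_sphere, dist_comm, dist_eq_norm] at hq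
  rw [dist_eq_norm, inversion_one_sub, norm_sub_sq_real, hq, norm_smul, real_inner_smul_left,
    mul_pow, norm_eq_abs, sq_abs, dist_eq_norm]
  field_simp
  ring

lemma inner_inversion_sub_eq_half (hq : q ∈ sphere d s) (hw : w ∈ sphere d s) (hwq : w ≠ q) :
    ⟪inversion q 1 w - q, d - q⟫ = 1 / 2 := by
  have hinv : inversion q 1 w ≠ q := (EuclideanGeometry.inversion_eq_center one_ne_zero).not.2 hwq
  have hpower := dist_inversion_sq_sub_sq_of_mem_sphere hq hinv
  rw [EuclideanGeometry.inversion_inversion q one_ne_zero, mem_sphere.1 hw, sub_self, eq_comm,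
    div_eq_zero_iff, or_iff_left (pow_ne_zero 2 (dist_ne_zero.2 hinv))] at hpower
  linarith

lemma half_lt_inner_of_inversion_mem_ball (hq : q ∈ sphere d s) (hw : inversion q 1 w ∈ ball d s) :
    1 / 2 < ⟪w - q, d - q⟫ := by
  have hwq : w ≠ q := by
    rintro rfl
    rw [EuclideanGeometry.inversion_self, mem_ball, mem_sphere.1 hq] at hw
    exact lt_irrefl _ hw
  have hneg : dist (inversion q 1 w) d ^ 2 - s ^ 2 < 0 :=
    sub_neg.2 (pow_lt_pow_left₀ (mem_ball.1 hw) dist_nonneg two_ne_zero)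
  rw [dist_inversion_sq_sub_sq_of_mem_sphere hq hwq, div_lt_iff₀ (pow_pos (dist_pos.2 hwq) 2),
    zero_mul] at hneg
  linarith

lemma inner_lt_inner_of_inversion_mem_ball {x : V} (hq : q ∈ sphere d s) (hx : x ∈ sphere d s)
    (hxq : x ≠ q) (hw : inversion q 1 w ∈ ball d s) : ⟪inversion q 1 x, d - q⟫ < ⟪w, d - q⟫ := by
  have hxhalf := inner_inversion_sub_eq_half hq hx hxq
  have hwhalf := half_lt_inner_of_inversion_mem_ball hq hw
  rw [inner_sub_left] at hxhalf hwhalf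
  linarith

end Inversion

section Comparison

variable {a b d e q x : ℂ} {α β s t : ℝ}

lemma extAngle_inversionCenter (hα : 0 ≤ α) (ht : 0 ≤ t) (hqa : q ∉ closedBall a α)
    (hqe : q ∉ closedBall e t) :
    extAngle (inversionCenter q a α) (inversionRadius q a α) (inversionCenter q e t)
      (inversionRadius q e t) = extAngle a α e t := by
  have hPa := (dist_sq_sub_sq_pos hα hqa).ne'
  have hPe := (dist_sq_sub_sq_pos ht hqe).ne'
  rw [extAngle, extAngle, dist_inversionCenter_sq_sub_sq_sub_sq hPa hPe]
  unfold inversionRadius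
  congr 1
  field_simp

lemma angle_inversion_sub_inversionCenter (hα : 0 ≤ α) (hqa : q ∉ closedBall a α)
    (hqd : q ∈ sphere d s) (hxa : x ∈ sphere a α) (hxd : x ∈ sphere d s) :
    angle (inversion q 1 x - inversionCenter q a α) (d - q) = extAngle a α d s := by
  have hP := (dist_sq_sub_sq_pos hα hqa).ne'
  have hxq : x ≠ q := fun h ↦ hqa (h ▸ sphere_subset_closedBall hxa)
  have hnorm : ‖inversion q 1 x - inversionCenter q a α‖ = inversionRadius q a α := by
    rw [← dist_eq_norm, mem_sphere.1 (inversion_mem_sphere hα hqa hxa)]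
  have hdq : ‖d - q‖ = s := by rw [← dist_eq_norm, dist_comm, mem_sphere.1 hqd]
  have hdist : dist a d ^ 2 = dist a q ^ 2 - 2 * ⟪a - q, d - q⟫ + s ^ 2 := by
    rw [dist_eq_norm, dist_eq_norm, ← sub_sub_sub_cancel_right a d q, norm_sub_sq_real, hdq]
  have hinner : ⟪inversion q 1 x - inversionCenter q a α, d - q⟫ =
      1 / 2 - (dist a q ^ 2 - α ^ 2)⁻¹ * ⟪a - q, d - q⟫ := by
    rw [inversionCenter, ← sub_sub, inner_sub_left, inner_inversion_sub_eq_half hqd hxd hxq,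
      real_inner_smul_left]
  rw [angle, extAngle, hnorm, hdq, hinner, hdist, inversionRadius]
  congr 1
  field_simp
  ring

lemma extAngle_add_extAngle_lt_of_mem_sphere {p z y : ℂ} (hα : 0 ≤ α) (hβ : 0 ≤ β) (ht : 0 ≤ t)
    (hin : closedBall e t ⊆ ball d s)
    (hdisj : closedBall a α ∩ closedBall b β ∩ closedBall e t = ∅)
    (hqd : q ∈ sphere d s) (hqa : q ∉ closedBall a α) (hqb : q ∉ closedBall b β)
    (hpa : p ∈ sphere a α) (hpe : p ∈ sphere e t) (hzb : z ∈ sphere b β) (hze : z ∈ sphere e t)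
    (hxa : x ∈ sphere a α) (hxd : x ∈ sphere d s) (hyb : y ∈ sphere b β) (hyd : y ∈ sphere d s) :
    extAngle a α e t + extAngle b β e t < extAngle a α d s + extAngle b β d s := by
  have hqe : q ∉ closedBall e t := fun h ↦ (mem_ball.1 (hin h)).ne (mem_sphere.1 hqd)
  have hxq : x ≠ q := fun h ↦ hqa (h ▸ sphere_subset_closedBall hxa)
  have hyq : y ≠ q := fun h ↦ hqb (h ▸ sphere_subset_closedBall hyb)
  have hin_inv : ∀ w ∈ closedBall (inversionCenter q e t) (inversionRadius q e t),
      inversion q 1 w ∈ ball d s :=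
    fun w hw ↦ hin ((inversion_mem_closedBall_iff ht hqe).2 hw)
  rw [← extAngle_inversionCenter hα ht hqa hqe, ← extAngle_inversionCenter hβ ht hqb hqe,
    ← angle_inversion_sub_inversionCenter hα hqa hqd hxa hxd,
    ← angle_inversion_sub_inversionCenter hβ hqb hqd hyb hyd]
  refine extAngle_add_extAngle_lt_of_closedBall_subset_halfPlane (inversion_mem_sphere hα hqa hpa)
    (inversion_mem_sphere ht hqe hpe) (inversion_mem_sphere hβ hqb hzb)
    (inversion_mem_sphere ht hqe hze) ?_
    (inversion_mem_sphere hα hqa hxa)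
    (fun w hw ↦ inner_lt_inner_of_inversion_mem_ball hqd hxd hxq (hin_inv w hw))
    (inversion_mem_sphere hβ hqb hyb)
    (fun w hw ↦ inner_lt_inner_of_inversion_mem_ball hqd hyd hyq (hin_inv w hw))
  refine Set.eq_empty_of_forall_notMem fun w ⟨⟨hwa, hwb⟩, hwe⟩ ↦
    Set.eq_empty_iff_forall_notMem.1 hdisj (inversion q 1 w) ⟨⟨?_, ?_⟩, ?_⟩
  · exact (inversion_mem_closedBall_iff hα hqa).2 hwa
  · exact (inversion_mem_closedBall_iff hβ hqb).2 hwb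
  · exact (inversion_mem_closedBall_iff ht hqe).2 hwe

lemma extAngle_add_extAngle_lt (hin : closedBall e t ⊆ ball d s)
    (hA : (ball a α ∩ ball e t).Nonempty) (hB : (ball b β ∩ ball e t).Nonempty)
    (hdisj : closedBall a α ∩ closedBall b β ∩ closedBall d s = ∅)
    (hAD : ¬ closedBall a α ⊆ closedBall d s) (hBD : ¬ closedBall b β ⊆ closedBall d s) :
    extAngle a α e t + extAngle b β e t < extAngle a α d s + extAngle b β d s := by
  have hα : 0 ≤ α := (nonempty_ball.1 hA.left).le
  have hβ : 0 ≤ β := (nonempty_ball.1 hB.left).le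
  have ht : 0 ≤ t := (nonempty_ball.1 hA.right).le
  have hrank : 1 < Module.rank ℝ ℂ := by simp [Complex.rank_real_complex]
  have hED : closedBall e t ⊆ closedBall d s := hin.trans ball_subset_closedBall
  have hdisjE : closedBall a α ∩ closedBall b β ∩ closedBall e t = ∅ :=
    Set.subset_empty_iff.1 (hdisj ▸ Set.inter_subset_inter_right _ hED)
  have hAE : (closedBall a α ∩ closedBall e t).Nonempty :=
    hA.mono (Set.inter_subset_inter ball_subset_closedBall ball_subset_closedBall)
  have hBE : (closedBall b β ∩ closedBall e t).Nonempty :=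
    hB.mono (Set.inter_subset_inter ball_subset_closedBall ball_subset_closedBall)
  have hEA : ¬ closedBall e t ⊆ closedBall a α := fun h ↦
    hBE.ne_empty (Set.subset_empty_iff.1 fun w hw ↦ hdisjE ▸ ⟨⟨h hw.2, hw.1⟩, hw.2⟩)
  have hEB : ¬ closedBall e t ⊆ closedBall b β := fun h ↦
    hAE.ne_empty (Set.subset_empty_iff.1 fun w hw ↦ hdisjE ▸ ⟨⟨hw.1, h hw.2⟩, hw.2⟩)
  obtain ⟨p, hpa, hpe⟩ :=
    sphere_inter_sphere_nonempty hrank hAE (fun h ↦ hAD (h.trans hED)) hEA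
  obtain ⟨z, hzb, hze⟩ :=
    sphere_inter_sphere_nonempty hrank hBE (fun h ↦ hBD (h.trans hED)) hEB
  obtain ⟨x, hxa, hxd⟩ := sphere_inter_sphere_nonempty hrank
    (hAE.mono (Set.inter_subset_inter_right _ hED)) hAD fun h ↦ hEA (hED.trans h)
  obtain ⟨y, hyb, hyd⟩ := sphere_inter_sphere_nonempty hrank
    (hBE.mono (Set.inter_subset_inter_right _ hED)) hBD fun h ↦ hEB (hED.trans h)
  obtain ⟨q, hqd, hqa, hqb⟩ : ∃ q ∈ sphere d s, q ∉ closedBall a α ∧ q ∉ closedBall b β :=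
    exists_notMem_notMem_of_isPreconnected (isPreconnected_sphere hrank d s) isClosed_closedBall
      isClosed_closedBall ⟨x, hxd, sphere_subset_closedBall hxa⟩
      ⟨y, hyd, sphere_subset_closedBall hyb⟩ (Set.subset_empty_iff.1 fun w hw ↦
        hdisj ▸ ⟨hw.2, sphere_subset_closedBall hw.1⟩)
  exact extAngle_add_extAngle_lt_of_mem_sphere hα hβ ht hin hdisjE hqd hqa hqb hpa hpe hzb hze
    hxa hxd hyb hyd

end Comparison

section Loop

lemma apply_ne_self_of_apply_apply_ne_self {X : Type*} {f : X → X} {x : X} (h : f (f x) ≠ x) :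
    f x ≠ x := fun hx ↦ h (by rw [hx, hx])

lemma sum_lt_sum_of_add_lt_add {ι M : Type*} [Fintype ι] [AddCommGroup M] [PartialOrder M]
    [IsOrderedAddMonoid M] {f g : ι → M} {i j : ι} (hij : i ≠ j)
    (heq : ∀ k, k ≠ i ∧ k ≠ j → f k = g k) (hlt : f i + f j < g i + g j) :
    ∑ k, f k < ∑ k, g k := by
  rw [← sub_pos, ← Finset.sum_sub_distrib,
    Fintype.sum_eq_add i j hij fun k hk ↦ sub_eq_zero.2 (heq k hk).symm, sub_add_sub_comm]
  exact sub_pos.2 hlt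

variable {ι : Type*} {σ : Equiv.Perm ι} {c c' : ι → ℂ} {r r' : ι → ℝ}

/-- No three of the disks with centers `c i` and radii `r i` have a common point. -/
def IsThin (c : ι → ℂ) (r : ι → ℝ) : Prop :=
  ∀ i j k, i ≠ j → j ≠ k → i ≠ k →
    closedBall (c i) (r i) ∩ closedBall (c j) (r j) ∩ closedBall (c k) (r k) = ∅

/-- Every disk overlaps its successor, where the successor of the disk with index `i` is the disk
with index `σ i`. The disks thus form one closed chain for each cycle of `σ`. -/
def IsLoop (σ : Equiv.Perm ι) (c : ι → ℂ) (r : ι → ℝ) : Prop :=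
  ∀ i, (ball (c i) (r i) ∩ ball (c (σ i)) (r (σ i))).Nonempty

/-- The sum of the external intersection angles of the disks with their successors under `σ`. -/
noncomputable def angleSum [Fintype ι] (σ : Equiv.Perm ι) (c : ι → ℂ) (r : ι → ℝ) : ℝ :=
  ∑ i, extAngle (c i) (r i) (c (σ i)) (r (σ i))

lemma IsThin.mono (h : IsThin c r) (hsub : ∀ i, closedBall (c' i) (r' i) ⊆ closedBall (c i) (r i)) :
    IsThin c' r' := fun i j k hij hjk hik ↦ Set.subset_empty_iff.1 <|
  h i j k hij hjk hik ▸ Set.inter_subset_inter (Set.inter_subset_inter (hsub i) (hsub j)) (hsub k)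

lemma IsLoop.mono (h : IsLoop σ c r) (hsub : ∀ i, ball (c i) (r i) ⊆ ball (c' i) (r' i)) :
    IsLoop σ c' r' := fun i ↦
  (h i).mono (Set.inter_subset_inter (hsub i) (hsub (σ i)))

lemma IsThin.not_closedBall_subset (h : IsThin c r) {i j k : ι} (hij : i ≠ j) (hjk : j ≠ k)
    (hik : i ≠ k) (hov : (ball (c i) (r i) ∩ ball (c j) (r j)).Nonempty) :
    ¬ closedBall (c j) (r j) ⊆ closedBall (c k) (r k) := by
  intro hsub
  obtain ⟨w, hwi, hwj⟩ := hov
  exact Set.eq_empty_iff_forall_notMem.1 (h i j k hij hjk hik) w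
    ⟨⟨ball_subset_closedBall hwi, ball_subset_closedBall hwj⟩, hsub (ball_subset_closedBall hwj)⟩

lemma IsLoop.not_closedBall_subset_succ (hloop : IsLoop σ c r) (hthin : IsThin c r)
    (hσ : ∀ i, σ (σ i) ≠ i) (i : ι) :
    ¬ closedBall (c i) (r i) ⊆ closedBall (c (σ i)) (r (σ i)) := by
  obtain ⟨j, rfl⟩ := σ.surjective i
  have hne (k : ι) : σ k ≠ k := apply_ne_self_of_apply_apply_ne_self (hσ k)
  exact hthin.not_closedBall_subset (hne j).symm (hne (σ j)).symm (hσ j).symm (hloop j)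

lemma IsLoop.not_closedBall_succ_subset (hloop : IsLoop σ c r) (hthin : IsThin c r)
    (hσ : ∀ i, σ (σ i) ≠ i) (i : ι) :
    ¬ closedBall (c (σ i)) (r (σ i)) ⊆ closedBall (c i) (r i) := by
  have hne (k : ι) : σ k ≠ k := apply_ne_self_of_apply_apply_ne_self (hσ k)
  exact hthin.not_closedBall_subset (hne (σ i)) (hne i) (hσ i)
    (Set.inter_comm _ _ ▸ hloop (σ i))

lemma angleSum_update_lt [Fintype ι] [DecidableEq ι] (hσ : ∀ i, σ (σ i) ≠ i) (hthin : IsThin c r)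
    (hloop : IsLoop σ c r) {i : ι} {e : ℂ} {t : ℝ} (hin : closedBall e t ⊆ ball (c i) (r i))
    (hloop' : IsLoop σ (Function.update c i e) (Function.update r i t)) :
    angleSum σ (Function.update c i e) (Function.update r i t) < angleSum σ c r := by
  obtain ⟨j, rfl⟩ := σ.surjective i
  have hj : j ≠ σ j := (apply_ne_self_of_apply_apply_ne_self (hσ j)).symm
  have hsucc : σ (σ j) ≠ σ j := apply_ne_self_of_apply_apply_ne_self (hσ (σ j))
  refine sum_lt_sum_of_add_lt_add hj (fun k hk ↦ ?_) ?_
  · have hσk : σ k ≠ σ j := σ.injective.ne hk.1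
    simp only [Function.update_of_ne hk.2, Function.update_of_ne hσk]
  have hA := hloop' j
  have hB := hloop' (σ j)
  simp only [Function.update_self, Function.update_of_ne hj, Function.update_of_ne hsucc]
    at hA hB ⊢
  rw [extAngle_comm e, extAngle_comm (c (σ j)) (r (σ j))]
  exact extAngle_add_extAngle_lt hin hA (Set.inter_comm _ _ ▸ hB)
    (hthin _ _ _ (hσ j).symm hsucc hj) (hloop.not_closedBall_subset_succ hthin hσ j)
    (hloop.not_closedBall_succ_subset hthin hσ (σ j))

lemma strictAnti_angleSum_piecewise [Fintype ι] [DecidableEq ι] (hσ : ∀ i, σ (σ i) ≠ i)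
    (hthin : IsThin c r) (hin : ∀ i, closedBall (c' i) (r' i) ⊆ ball (c i) (r i))
    (hloop' : IsLoop σ c' r') :
    StrictAnti fun S : Finset ι ↦ angleSum σ (S.piecewise c' c) (S.piecewise r' r) := by
  have hthinS (S : Finset ι) : IsThin (S.piecewise c' c) (S.piecewise r' r) := by
    refine hthin.mono fun i ↦ ?_
    by_cases hi : i ∈ S
    · simpa only [S.piecewise_eq_of_mem _ _ hi] using (hin i).trans ball_subset_closedBall
    · simp only [S.piecewise_eq_of_notMem _ _ hi, subset_rfl]
  have hloopS (S : Finset ι) : IsLoop σ (S.piecewise c' c) (S.piecewise r' r) := by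
    refine hloop'.mono fun i ↦ ?_
    by_cases hi : i ∈ S
    · simp only [S.piecewise_eq_of_mem _ _ hi, subset_rfl]
    · simpa only [S.piecewise_eq_of_notMem _ _ hi] using ball_subset_closedBall.trans (hin i)
  refine Finset.strictAnti_iff_forall_lt_insert.2 fun S i hi ↦ ?_
  have hloop_insert := hloopS (insert i S)
  simp only [Finset.piecewise_insert] at hloop_insert ⊢
  refine angleSum_update_lt hσ (hthinS S) (hloopS S) ?_ hloop_insert
  simpa only [S.piecewise_eq_of_notMem _ _ hi] using hin i

end Loop

theorem prop_no_contained_loops_general {ι : Type*} [Fintype ι] [Nonempty ι] {σ : Equiv.Perm ι}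
    (hσ : ∀ i, σ (σ i) ≠ i) {c c' : ι → ℂ} {r r' : ι → ℝ} (hthin : IsThin c r)
    (hin : ∀ i, closedBall (c' i) (r' i) ⊆ ball (c i) (r i)) (hloop' : IsLoop σ c' r') :
    angleSum σ c' r' < angleSum σ c r ∧
      ∃ i, extAngle (c i) (r i) (c (σ i)) (r (σ i)) ≠
        extAngle (c' i) (r' i) (c' (σ i)) (r' (σ i)) := by
  classical
  have hlt : angleSum σ c' r' < angleSum σ c r := by
    simpa only [Finset.piecewise_univ, Finset.piecewise_empty] using
      strictAnti_angleSum_piecewise hσ hthin hin hloop'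
        (Finset.empty_ssubset.2 Finset.univ_nonempty)
  obtain ⟨i, -, hi⟩ := Finset.exists_lt_of_sum_lt hlt
  exact ⟨hlt, i, hi.ne'⟩

lemma zmod_add_one_add_one_ne_self {n : ℕ} (hn : 3 ≤ n) (i : ZMod n) : i + 1 + 1 ≠ i := by
  rw [add_assoc, one_add_one_eq_two, Ne, add_eq_left, ← Nat.cast_ofNat, ZMod.natCast_eq_zero_iff]
  exact Nat.not_dvd_of_pos_of_lt two_pos hn

/-- **Proposition (no contained loops).**  Let `n ≥ 3` and let `{Dᵢ}` and `{D̃ᵢ}`,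
`i ∈ ℤ/nℤ`, be thin (no three disks have a common point) closed-disk chains in `ℂ`,
in general position, with `D̃ᵢ` contained in the interior of `Dᵢ`, consecutive disks
overlapping in both chains, and `Dᵢ` meeting `Dⱼ` only when `i = j ± 1`.  Then
`Σᵢ ∠(D̃ᵢ,D̃ᵢ₊₁) < Σᵢ ∠(Dᵢ,Dᵢ₊₁)`; in particular some angle differs. -/
theorem prop_no_contained_loops
    (n : ℕ) [NeZero n] (hn : 3 ≤ n)
    (c c' : ZMod n → ℂ) (r r' : ZMod n → ℝ)
    (hr : ∀ i, 0 < r i) (hr' : ∀ i, 0 < r' i)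
    -- thinness of both collections:
    (hthin : ∀ i j k : ZMod n, i ≠ j → j ≠ k → i ≠ k →
      closedBall (c i) (r i) ∩ closedBall (c j) (r j) ∩ closedBall (c k) (r k) = ∅)
    (hthin' : ∀ i j k : ZMod n, i ≠ j → j ≠ k → i ≠ k →
      closedBall (c' i) (r' i) ∩ closedBall (c' j) (r' j) ∩ closedBall (c' k) (r' k) = ∅)
    -- `D̃ᵢ` is contained in the interior of `Dᵢ`:
    (hin : ∀ i, closedBall (c' i) (r' i) ⊆ ball (c i) (r i))
    -- consecutive disks overlap:
    (hov : ∀ i, (ball (c i) (r i) ∩ ball (c (i + 1)) (r (i + 1))).Nonempty)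
    (hov' : ∀ i, (ball (c' i) (r' i) ∩ ball (c' (i + 1)) (r' (i + 1))).Nonempty)
    -- `Dᵢ` meets `Dⱼ` only when `i = j ± 1`:
    (hmeet : ∀ i j : ZMod n, i ≠ j →
      (closedBall (c i) (r i) ∩ closedBall (c j) (r j)).Nonempty → j = i + 1 ∨ j = i - 1)
    -- general position of the two collections together:
    (hgen : ∀ i j : ZMod n, CircTrans (c i) (r i) (c' j) (r' j)) :
    (∑ i : ZMod n, extAngle (c' i) (r' i) (c' (i + 1)) (r' (i + 1)))
        < (∑ i : ZMod n, extAngle (c i) (r i) (c (i + 1)) (r (i + 1))) ∧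
      ∃ i : ZMod n,
        extAngle (c i) (r i) (c (i + 1)) (r (i + 1))
          ≠ extAngle (c' i) (r' i) (c' (i + 1)) (r' (i + 1)) := by
  exact prop_no_contained_loops_general (σ := Equiv.addRight 1) (zmod_add_one_add_one_ne_self hn)
    hthin hin hov'
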